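/- Let G = (V, E) be a strongly connected digraph with start vertex s, let r be a root (r = s or r marked), and let v, w be two vertices of T(r). Then there is a path from v to w in G if and only if there is a path from v to w in the auxiliary graph G_r. -/

import Mathlib

variable {V : Type*}

/-- `p` is a path from `u` to `w` in the digraph with edge set `E`:
a nonempty list of vertices starting at `u`, ending at `w`, with consecutive edges in `E`. -/
def IsPathFrom (E : Set (V × V)) (u w : V) (p : List V) : Prop :=
  p.head? = some u ∧ p.getLast? = some w ∧ p.Chain' (fun a b => (a, b) ∈ E)

/-- There is a path from `u` to `w` in the digraph with edge set `E`. -/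
def Reaches (E : Set (V × V)) (u w : V) : Prop :=
  ∃ p, IsPathFrom E u w p

/-- Every vertex has a path to every other vertex. -/
def StronglyConnected (E : Set (V × V)) : Prop :=
  ∀ u w : V, Reaches E u w

/-- `v` and `w` are 2-edge-connected: `v = w` or, for every edge `e`,
there are paths from `v` to `w` and from `w` to `v` avoiding `e`. -/
def TwoEdgeConn (E : Set (V × V)) (v w : V) : Prop :=
  v = w ∨ ∀ e ∈ E, Reaches (E \ {e}) v w ∧ Reaches (E \ {e}) w v

/-- `w` is 2-edge-connected from `v`: for every edge `e` there is a path
from `v` to `w` avoiding `e`. -/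
def TwoEdgeConnFrom (E : Set (V × V)) (v w : V) : Prop :=
  ∀ e ∈ E, Reaches (E \ {e}) v w

/-- `u` dominates `w` in the flow graph with start vertex `s`:
every path from `s` to `w` contains `u`. -/
def Dominates (E : Set (V × V)) (s u w : V) : Prop :=
  ∀ p, IsPathFrom E s w p → u ∈ p

/-- `(u, w)` is a bridge of the flow graph with start vertex `s`:
every path from `s` to `w` contains the edge `(u, w)`. -/
def IsBridge (E : Set (V × V)) (s u w : V) : Prop :=
  (u, w) ∈ E ∧ ∀ p, IsPathFrom E s w p → (u, w) ∈ p.zip p.tail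

/-- `w` is marked in the flow graph with start vertex `s`: some bridge ends at `w`. -/
def Marked (E : Set (V × V)) (s w : V) : Prop :=
  ∃ u, IsBridge E s u w

/-- The reverse digraph: every edge direction is reversed. -/
def reverseE (E : Set (V × V)) : Set (V × V) :=
  {e | (e.2, e.1) ∈ E}

/-- `u` and `w` are mutually reachable. -/
def MutualReach (E : Set (V × V)) (u w : V) : Prop :=
  Reaches E u w ∧ Reaches E w u

/-- The number of strongly connected components: the number of equivalence
classes of the mutual-reachability relation. -/
noncomputable def numSCC (E : Set (V × V)) : ℕ :=
  Nat.card (Quot (MutualReach E))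

/-- `e` is a strong bridge: removing it increases the number of strongly
connected components. -/
def IsStrongBridge (E : Set (V × V)) (e : V × V) : Prop :=
  e ∈ E ∧ numSCC E < numSCC (E \ {e})

/-- `d` is the immediate dominator of `w` in the flow graph with start vertex `s`:
`d` is a proper dominator of `w` dominated by every proper dominator of `w`. -/
def ImmDomIs (E : Set (V × V)) (s w d : V) : Prop :=
  Dominates E s d w ∧ d ≠ w ∧ ∀ x, Dominates E s x w → x ≠ w → Dominates E s x d

/-- `r` is the deepest marked dominator `r_v` of `v`: either `r` is a marked
dominator of `v` dominated by every marked dominator of `v`, or no marked vertex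
dominates `v` and `r = s`. -/
def DeepestMarkedDomIs (E : Set (V × V)) (s v r : V) : Prop :=
  (Marked E s r ∧ Dominates E s r v ∧
    ∀ x, Marked E s x → Dominates E s x v → Dominates E s x r)
  ∨ (r = s ∧ ∀ x, Marked E s x → ¬ Dominates E s x v)

/-- `T(r)`: the vertices whose deepest marked dominator is `r`. -/
def Tset (E : Set (V × V)) (s r : V) : Set V :=
  {v | DeepestMarkedDomIs E s v r}

/-- The roots of the decomposition of the dominator tree: `s` and the marked vertices. -/
def IsRoot (E : Set (V × V)) (s r : V) : Prop :=
  r = s ∨ Marked E s r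

/-- `z` is a marked child (in the dominator tree) of a boundary vertex of `T(r)`. -/
def MarkedChildOfBoundary (E : Set (V × V)) (s r z : V) : Prop :=
  Marked E s z ∧ ∃ x ∈ Tset E s r, ImmDomIs E s z x

/-- The vertex set `V_r` of the auxiliary graph `G_r` (with `dr` playing the role
of `d(r)` when `r ≠ s`): the ordinary vertices `T(r)`, the marked children of
boundary vertices of `T(r)`, and (if `r ≠ s`) the vertex `d(r)`. -/
def auxVerts (E : Set (V × V)) (s r dr : V) : Set V :=
  Tset E s r ∪ {z | MarkedChildOfBoundary E s r z} ∪ {x | r ≠ s ∧ x = dr}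

/-- The edge set `E_r` of the auxiliary graph `G_r` (with `dr` playing the role of
`d(r)` when `r ≠ s`): edges of `G` between ordinary vertices; the edge `(v, w)` for
each boundary vertex `v ∈ T(r)` and marked child `w` of `v`; the edge `(d(r), r)` if
`r ≠ s`; and the shortcut edges of types (a), (b), (c). -/
def auxEdges (E : Set (V × V)) (s r dr : V) : Set (V × V) :=
  {e | e ∈ E ∧ e.1 ∈ Tset E s r ∧ e.2 ∈ Tset E s r} ∪
  {e | e.1 ∈ Tset E s r ∧ Marked E s e.2 ∧ ImmDomIs E s e.2 e.1} ∪
  {e | r ≠ s ∧ e = (dr, r)} ∪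
  {e | ∃ u v, (u, v) ∈ E ∧ u ∈ Tset E s r ∧ ¬ Dominates E s r v ∧ e = (u, dr)} ∪
  {e | ∃ u v z, (u, v) ∈ E ∧ v ∈ Tset E s r ∧ Dominates E s r u ∧ u ∉ Tset E s r ∧
      MarkedChildOfBoundary E s r z ∧ Dominates E s z u ∧ e = (z, v)} ∪
  {e | ∃ u v z, (u, v) ∈ E ∧ Dominates E s r u ∧ u ∉ Tset E s r ∧ ¬ Dominates E s r v ∧
      MarkedChildOfBoundary E s r z ∧ Dominates E s z u ∧ e = (z, dr)}

/-!
Contract `G` onto `G_r`: a vertex of `T(r)` stays where it is, a vertex dominated by `r` but outside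
`T(r)` goes to the marked child of a boundary vertex that dominates it, and a vertex not dominated
by `r` goes to `d(r)`. An edge can enter the set of vertices dominated by `b` only at `b` itself,
and if `b` is marked, only from its immediate dominator. Hence the contraction maps each edge of
`G` to an edge of `G_r` or collapses it to a single vertex, and paths of `G` between vertices of
`T(r)` become paths of `G_r`. The converse direction is immediate from strong connectivity.
-/

open Relation

section Paths

variable {E : Set (V × V)} {s u w x y : V} {p : List V}

theorem isPathFrom_singleton (E : Set (V × V)) (s : V) : IsPathFrom E s s [s] :=
  ⟨rfl, rfl, List.isChain_singleton s⟩

theorem IsPathFrom.concat (hp : IsPathFrom E s x p) (hxy : (x, y) ∈ E) :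
    IsPathFrom E s y (p ++ [y]) := by
  obtain ⟨hhead, hlast, hchain⟩ := hp
  refine ⟨by simp [hhead], by simp, List.isChain_append.2 ⟨hchain, List.isChain_singleton y, ?_⟩⟩
  simpa [hlast] using hxy

theorem IsPathFrom.exists_prefix_of_mem (hp : IsPathFrom E s w p) (hu : u ∈ p) :
    ∃ q, q <+: p ∧ IsPathFrom E s u q := by
  obtain ⟨l₁, l₂, rfl⟩ := List.append_of_mem hu
  rw [List.append_cons] at hp ⊢
  refine ⟨l₁ ++ [u], List.prefix_append _ l₂, ?_, by simp, hp.2.2.left_of_append⟩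
  simpa [List.head?_append] using hp.1

theorem reaches_iff_reflTransGen :
    Reaches E u w ↔ ReflTransGen (fun a b => (a, b) ∈ E) u w := by
  constructor
  · rintro ⟨_ | ⟨a, l⟩, hhead, hlast, hchain⟩
    · simp at hhead
    · obtain rfl : a = u := by simpa using hhead
      exact List.relationReflTransGen_of_exists_isChain_cons l hchain
        (by simpa [List.getLast?_eq_some_getLast] using hlast)
  · intro h
    obtain ⟨l, hchain, hlast⟩ := List.exists_isChain_cons_of_relationReflTransGen h
    exact ⟨u :: l, rfl, by rw [List.getLast?_eq_some_getLast (List.cons_ne_nil u l), hlast], hchain⟩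

theorem Reaches.refl (E : Set (V × V)) (u : V) : Reaches E u u :=
  ⟨[u], isPathFrom_singleton E u⟩

theorem Reaches.tail (h : Reaches E u x) (hxy : (x, y) ∈ E) : Reaches E u y :=
  let ⟨p, hp⟩ := h
  ⟨p ++ [y], hp.concat hxy⟩

theorem Reaches.trans (huw : Reaches E u w) (hwx : Reaches E w x) : Reaches E u x :=
  reaches_iff_reflTransGen.2
    ((reaches_iff_reflTransGen.1 huw).trans (reaches_iff_reflTransGen.1 hwx))

end Paths

section Dominators

variable {E : Set (V × V)} {s a b c x y : V}

theorem Dominates.refl (E : Set (V × V)) (s a : V) : Dominates E s a a :=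
  fun _ hp => List.mem_of_getLast? hp.2.1

theorem start_dominates (E : Set (V × V)) (s a : V) : Dominates E s s a :=
  fun _ hp => List.mem_of_head? hp.1

theorem Dominates.eq_start (h : Dominates E s a s) : a = s := by
  simpa using h [s] (isPathFrom_singleton E s)

theorem Dominates.trans (hab : Dominates E s a b) (hbc : Dominates E s b c) :
    Dominates E s a c := by
  intro p hp
  obtain ⟨q, hqp, hq⟩ := hp.exists_prefix_of_mem (hbc p hp)
  exact hqp.subset (hab q hq)

theorem Dominates.reaches (h : Dominates E s a x) (hx : Reaches E s x) : Reaches E s a :=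
  let ⟨p, hp⟩ := hx
  let ⟨q, _, hq⟩ := hp.exists_prefix_of_mem (h p hp)
  ⟨q, hq⟩

theorem Dominates.of_edge (h : Dominates E s a y) (hxy : (x, y) ∈ E) (hay : a ≠ y) :
    Dominates E s a x := by
  intro p hp
  simpa [hay] using h (p ++ [y]) (hp.concat hxy)

theorem Dominates.eq_of_edge (h : Dominates E s a y) (hxy : (x, y) ∈ E)
    (hx : ¬ Dominates E s a x) : a = y :=
  by_contra fun hay => hx (h.of_edge hxy hay)

theorem exists_edge_not_dominates (ha : Reaches E s a) (has : a ≠ s) :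
    ∃ x, (x, a) ∈ E ∧ ¬ Dominates E s a x := by
  suffices ∀ y, ReflTransGen (fun a b => (a, b) ∈ E) s y → Dominates E s a y →
      ∃ x, (x, a) ∈ E ∧ ¬ Dominates E s a x from
    this a (reaches_iff_reflTransGen.1 ha) (Dominates.refl E s a)
  intro y hy hay
  induction hy with
  | refl => exact absurd hay.eq_start has
  | @tail x y _ hxy ih =>
    by_cases hax : Dominates E s a x
    · exact ih hax
    · obtain rfl := hay.eq_of_edge hxy hax
      exact ⟨x, hxy, hax⟩

theorem Dominates.antisymm (ha : Reaches E s a) (hab : Dominates E s a b)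
    (hba : Dominates E s b a) : a = b := by
  suffices ∀ x, ReflTransGen (fun a b => (a, b) ∈ E) s x → ∀ a b, Dominates E s a b →
      Dominates E s b a → Dominates E s a x → a = b from
    this a (reaches_iff_reflTransGen.1 ha) a b hab hba (Dominates.refl E s a)
  intro x hx
  induction hx with
  | refl =>
    intro a b _ hba has
    obtain rfl := has.eq_start
    exact hba.eq_start.symm
  | @tail x y _ hxy ih =>
    intro a b hab hba hay
    by_cases ha : a = y
    · subst ha
      by_contra hne
      exact hne (ih b a hba hab (hba.of_edge hxy (Ne.symm hne))).symm
    · exact ih a b hab hba (hay.of_edge hxy ha)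

theorem Dominates.total (hx : Reaches E s x) (ha : Dominates E s a x) (hb : Dominates E s b x) :
    Dominates E s a b ∨ Dominates E s b a := by
  rw [reaches_iff_reflTransGen] at hx
  induction hx with
  | refl => exact .inl (ha.eq_start ▸ start_dominates E s b)
  | @tail x y _ hxy ih =>
    by_cases hay : a = y
    · exact .inr (hay ▸ hb)
    by_cases hby : b = y
    · exact .inl (hby ▸ ha)
    exact ih (ha.of_edge hxy hay) (hb.of_edge hxy hby)

theorem finite_setOf_dominates (hx : Reaches E s x) : {a | Dominates E s a x}.Finite :=
  let ⟨p, hp⟩ := hx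
  p.finite_toSet.subset fun _ ha => ha p hp

/-- Dominance as a preorder, with `s` as a least element. It is kept as a definition rather than an
instance because it depends on `E` and `s`. -/
abbrev dominancePreorder (E : Set (V × V)) (s : V) : Preorder V where
  le := Dominates E s
  le_refl := Dominates.refl E s
  le_trans _ _ _ := Dominates.trans

theorem exists_minimal_dominator {P : V → Prop} (hx : Reaches E s x)
    (hP : ∃ a, Dominates E s a x ∧ P a) :
    ∃ z, Dominates E s z x ∧ P z ∧
      ∀ a, Dominates E s a z → P a → Dominates E s z a := by
  let _ := dominancePreorder E s
  obtain ⟨z, ⟨hzx, hPz⟩, hmin⟩ :=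
    ((finite_setOf_dominates hx).subset fun _ h => h.1 :
      {a | Dominates E s a x ∧ P a}.Finite).exists_minimal hP
  exact ⟨z, hzx, hPz, fun a haz hPa => hmin ⟨haz.trans hzx, hPa⟩ haz⟩

theorem ImmDomIs.unique {d d' : V} (hx : Reaches E s x) (hd : ImmDomIs E s x d)
    (hd' : ImmDomIs E s x d') : d = d' :=
  Dominates.antisymm (hd.1.reaches hx) (hd'.2.2 d hd.1 hd.2.1) (hd.2.2 d' hd'.1 hd'.2.1)

end Dominators

section Bridges

variable {E : Set (V × V)} {s u x z : V}

theorem eq_of_mem_zip_tail_concat {p : List V} (hz : z ∉ p) (hx : p.getLast? = some x)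
    (huz : (u, z) ∈ (p ++ [z]).zip (p ++ [z]).tail) : u = x := by
  obtain ⟨i, hi, heq⟩ := List.mem_iff_getElem.1 huz
  have hlast : i + 1 = p.length := by grind
  grind

theorem Marked.ne_start (h : Marked E s z) : z ≠ s := by
  rintro rfl
  obtain ⟨u, -, hbridge⟩ := h
  simpa using hbridge [z] (isPathFrom_singleton E z)

theorem IsBridge.eq_of_edge (h : IsBridge E s u z) (hxz : (x, z) ∈ E)
    (hx : ¬ Dominates E s z x) : x = u := by
  simp only [Dominates, not_forall] at hx
  obtain ⟨p, hp, hzp⟩ := hx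
  exact (eq_of_mem_zip_tail_concat hzp hp.2.1 (h.2 _ (hp.concat hxz))).symm

theorem IsBridge.immDomIs (h : IsBridge E s u z) (hz : Reaches E s z) : ImmDomIs E s z u := by
  have huz : u ≠ z := by
    obtain ⟨x, hxz, hzx⟩ := exists_edge_not_dominates hz (Marked.ne_start ⟨u, h⟩)
    rintro rfl
    exact hzx (h.eq_of_edge hxz hzx ▸ Dominates.refl E s x)
  exact ⟨fun p hp => (List.of_mem_zip (h.2 p hp)).1, huz, fun t ht htz => ht.of_edge h.1 htz⟩

theorem Marked.immDomIs_of_edge (h : Marked E s z) (hz : Reaches E s z) (hxz : (x, z) ∈ E)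
    (hx : ¬ Dominates E s z x) : ImmDomIs E s z x := by
  obtain ⟨u, hu⟩ := h
  exact hu.eq_of_edge hxz hx ▸ hu.immDomIs hz

theorem mem_Tset_iff {r v : V} :
    v ∈ Tset E s r ↔ IsRoot E s r ∧ Dominates E s r v ∧
      ∀ t, Marked E s t → Dominates E s t v → Dominates E s t r := by
  constructor
  · rintro (⟨hr, hrv, hdeepest⟩ | ⟨rfl, hnone⟩)
    · exact ⟨.inr hr, hrv, hdeepest⟩
    · exact ⟨.inl rfl, start_dominates E r v, fun t ht htv => absurd htv (hnone t ht)⟩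
  · rintro ⟨rfl | hr, hrv, hdeepest⟩
    · exact .inr ⟨rfl, fun t ht htv => ht.ne_start (hdeepest t ht htv).eq_start⟩
    · exact .inl ⟨hr, hrv, hdeepest⟩

end Bridges

section MarkedChildren

variable {E : Set (V × V)} {s r x y z z' : V}

theorem exists_markedChildOfBoundary_dominates (hx : Reaches E s x) (hr : IsRoot E s r)
    (hrx : Dominates E s r x) (hxT : x ∉ Tset E s r) :
    ∃ z, MarkedChildOfBoundary E s r z ∧ Dominates E s z x := by
  have hmarked : ∃ t, Dominates E s t x ∧ Marked E s t ∧ ¬ Dominates E s t r := by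
    by_contra! h
    exact hxT (mem_Tset_iff.2 ⟨hr, hrx, fun t ht htx => h t htx ht⟩)
  obtain ⟨z, hzx, ⟨hz, hzr⟩, hmin⟩ := exists_minimal_dominator hx hmarked
  have hzreach := hzx.reaches hx
  obtain ⟨u, hbridge⟩ := hz
  have hu := hbridge.immDomIs hzreach
  have hrz : Dominates E s r z := (Dominates.total hx hrx hzx).resolve_right hzr
  have hru : Dominates E s r u :=
    hu.2.2 r hrz fun h => hzr (h ▸ Dominates.refl E s r)
  refine ⟨z, ⟨⟨u, hbridge⟩, u, mem_Tset_iff.2 ⟨hr, hru, fun t ht htu => ?_⟩, hu⟩, hzx⟩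
  by_contra htr
  have hzu := (hmin t (htu.trans hu.1) ⟨ht, htr⟩).trans htu
  exact hu.2.1 (Dominates.antisymm hzreach hzu hu.1).symm

theorem MarkedChildOfBoundary.root_dominates (hz : MarkedChildOfBoundary E s r z) :
    Dominates E s r z :=
  let ⟨_, _, hvT, hv⟩ := hz
  (mem_Tset_iff.1 hvT).2.1.trans hv.1

theorem MarkedChildOfBoundary.not_dominates (hz : MarkedChildOfBoundary E s r z)
    (hx : Reaches E s x) (hxT : x ∈ Tset E s r) : ¬ Dominates E s z x := by
  intro hzx
  obtain ⟨hmarked, v, hvT, hv⟩ := hz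
  have hzv : Dominates E s z v :=
    ((mem_Tset_iff.1 hxT).2.2 z hmarked hzx).trans (mem_Tset_iff.1 hvT).2.1
  exact hv.2.1 (Dominates.antisymm (hzx.reaches hx) hzv hv.1).symm

theorem MarkedChildOfBoundary.eq_of_dominates (hz : MarkedChildOfBoundary E s r z)
    (hz' : MarkedChildOfBoundary E s r z') (hz'reach : Reaches E s z')
    (hzz' : Dominates E s z z') : z = z' := by
  obtain ⟨-, v, hvT, hv⟩ := hz'
  by_contra hne
  exact hz.not_dominates (hv.1.reaches hz'reach) hvT (hv.2.2 z hzz' hne)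

theorem MarkedChildOfBoundary.unique (hx : Reaches E s x) (hz : MarkedChildOfBoundary E s r z)
    (hz' : MarkedChildOfBoundary E s r z') (hzx : Dominates E s z x)
    (hz'x : Dominates E s z' x) : z = z' := by
  rcases Dominates.total hx hzx hz'x with hzz' | hz'z
  · exact hz.eq_of_dominates hz' (hz'x.reaches hx) hzz'
  · exact (hz'.eq_of_dominates hz (hzx.reaches hx) hz'z).symm

theorem MarkedChildOfBoundary.immDomIs_of_edge (hz : MarkedChildOfBoundary E s r z)
    (hy : Reaches E s y) (hxy : (x, y) ∈ E) (hzy : Dominates E s z y)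
    (hzx : ¬ Dominates E s z x) : x ∈ Tset E s r ∧ ImmDomIs E s z x := by
  obtain rfl := hzy.eq_of_edge hxy hzx
  obtain ⟨hmarked, v, hvT, hv⟩ := hz
  have hx := hmarked.immDomIs_of_edge hy hxy hzx
  exact ⟨hv.unique hy hx ▸ hvT, hx⟩

end MarkedChildren

section Contraction

variable {E : Set (V × V)} {s r dr v w x y a b z : V}

theorem mem_auxEdges_of_edge (hxy : (x, y) ∈ E) (hx : x ∈ Tset E s r) (hy : y ∈ Tset E s r) :
    (x, y) ∈ auxEdges E s r dr :=
  .inl <| .inl <| .inl <| .inl <| .inl ⟨hxy, hx, hy⟩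

theorem mem_auxEdges_of_immDomIs (hx : x ∈ Tset E s r) (hz : Marked E s z)
    (hxz : ImmDomIs E s z x) : (x, z) ∈ auxEdges E s r dr :=
  .inl <| .inl <| .inl <| .inl <| .inr ⟨hx, hz, hxz⟩

theorem mem_auxEdges_root (hrs : r ≠ s) : (dr, r) ∈ auxEdges E s r dr :=
  .inl <| .inl <| .inl <| .inr ⟨hrs, rfl⟩

theorem mem_auxEdges_of_exit (hxy : (x, y) ∈ E) (hx : x ∈ Tset E s r)
    (hy : ¬ Dominates E s r y) : (x, dr) ∈ auxEdges E s r dr :=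
  .inl <| .inl <| .inr ⟨x, y, hxy, hx, hy, rfl⟩

theorem mem_auxEdges_of_child_return (hx : Reaches E s x) (hxy : (x, y) ∈ E)
    (hz : MarkedChildOfBoundary E s r z) (hzx : Dominates E s z x) (hy : y ∈ Tset E s r) :
    (z, y) ∈ auxEdges E s r dr :=
  .inl <| .inr ⟨x, y, z, hxy, hy, hz.root_dominates.trans hzx,
    fun hxT => hz.not_dominates hx hxT hzx, hz, hzx, rfl⟩

theorem mem_auxEdges_of_child_exit (hx : Reaches E s x) (hxy : (x, y) ∈ E)
    (hz : MarkedChildOfBoundary E s r z) (hzx : Dominates E s z x)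
    (hy : ¬ Dominates E s r y) : (z, dr) ∈ auxEdges E s r dr :=
  .inr ⟨x, y, z, hxy, hz.root_dominates.trans hzx,
    fun hxT => hz.not_dominates hx hxT hzx, hy, hz, hzx, rfl⟩

/-- `ContractsTo E s r dr x a`: the vertex `x` of `G` is represented by the vertex `a` of the
auxiliary graph `G_r`. This is the graph of a function, encoded as a relation so that the
representative `z` of a vertex outside `T(r)` need not be chosen. -/
inductive ContractsTo (E : Set (V × V)) (s r dr : V) : V → V → Prop
  | ordinary {x : V} (hx : x ∈ Tset E s r) : ContractsTo E s r dr x x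
  | child {x z : V} (hz : MarkedChildOfBoundary E s r z) (hzx : Dominates E s z x) :
      ContractsTo E s r dr x z
  | outside {x : V} (hx : ¬ Dominates E s r x) : ContractsTo E s r dr x dr

theorem exists_contractsTo (dr : V) (hr : IsRoot E s r) (hx : Reaches E s x) :
    ∃ a, ContractsTo E s r dr x a := by
  by_cases hrx : Dominates E s r x
  · by_cases hxT : x ∈ Tset E s r
    · exact ⟨x, .ordinary hxT⟩
    · obtain ⟨z, hz, hzx⟩ := exists_markedChildOfBoundary_dominates hx hr hrx hxT
      exact ⟨z, .child hz hzx⟩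
  · exact ⟨dr, .outside hrx⟩

theorem ContractsTo.eq_of_mem_Tset (h : ContractsTo E s r dr x a) (hx : Reaches E s x)
    (hxT : x ∈ Tset E s r) : a = x := by
  cases h with
  | ordinary => rfl
  | child hz hzx => exact absurd hzx (hz.not_dominates hx hxT)
  | outside hrx => exact absurd (mem_Tset_iff.1 hxT).2.1 hrx

theorem ContractsTo.eq_or_mem_auxEdges (hr : IsRoot E s r) (hx : Reaches E s x)
    (hxy : (x, y) ∈ E) (ha : ContractsTo E s r dr x a) (hb : ContractsTo E s r dr y b) :
    a = b ∨ (a, b) ∈ auxEdges E s r dr := by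
  have hy := hx.tail hxy
  cases ha with
  | ordinary hxT =>
    cases hb with
    | ordinary hyT => exact .inr (mem_auxEdges_of_edge hxy hxT hyT)
    | child hz hzy =>
      have hzx := (hz.immDomIs_of_edge hy hxy hzy (hz.not_dominates hx hxT)).2
      exact .inr (mem_auxEdges_of_immDomIs hxT hz.1 hzx)
    | outside hry => exact .inr (mem_auxEdges_of_exit hxy hxT hry)
  | child hz hzx =>
    cases hb with
    | ordinary hyT => exact .inr (mem_auxEdges_of_child_return hx hxy hz hzx hyT)
    | child hz' hz'y =>
      have hz'x : Dominates E s b x := by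
        by_contra hz'x
        exact hz.not_dominates hx (hz'.immDomIs_of_edge hy hxy hz'y hz'x).1 hzx
      exact .inl (hz.unique hx hz' hzx hz'x)
    | outside hry => exact .inr (mem_auxEdges_of_child_exit hx hxy hz hzx hry)
  | outside hrx =>
    by_cases hry : Dominates E s r y
    · obtain rfl := hry.eq_of_edge hxy hrx
      have hrs : r ≠ s := fun h => hrx (h ▸ start_dominates E s x)
      have hrT : r ∈ Tset E s r := mem_Tset_iff.2 ⟨hr, hry, fun _ _ h => h⟩
      obtain rfl := hb.eq_of_mem_Tset hy hrT
      exact .inr (mem_auxEdges_root hrs)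
    · cases hb with
      | ordinary hyT => exact absurd (mem_Tset_iff.1 hyT).2.1 hry
      | child hz hzy => exact absurd (hz.root_dominates.trans hzy) hry
      | outside => exact .inl rfl

theorem ContractsTo.exists_reaches_auxEdges (hr : IsRoot E s r) (hv : Reaches E s v)
    (ha : ContractsTo E s r dr v a) (hvw : Reaches E v w) :
    ∃ b, ContractsTo E s r dr w b ∧ Reaches (auxEdges E s r dr) a b := by
  rw [reaches_iff_reflTransGen] at hvw
  induction hvw with
  | refl => exact ⟨a, ha, Reaches.refl _ a⟩
  | @tail x y hvx hxy ih =>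
    obtain ⟨b, hb, hab⟩ := ih
    have hx : Reaches E s x := hv.trans (reaches_iff_reflTransGen.2 hvx)
    obtain ⟨c, hc⟩ := exists_contractsTo dr hr (hx.tail hxy)
    rcases hb.eq_or_mem_auxEdges hr hx hxy hc with rfl | hbc
    · exact ⟨b, hc, hab⟩
    · exact ⟨c, hc, hab.tail hbc⟩

theorem reaches_auxEdges_of_reaches (dr : V) (hs : Reaches E s v) (hv : v ∈ Tset E s r)
    (hw : w ∈ Tset E s r) (hvw : Reaches E v w) : Reaches (auxEdges E s r dr) v w := by
  have hr : IsRoot E s r := (mem_Tset_iff.1 hv).1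
  obtain ⟨b, hb, hvb⟩ := (ContractsTo.ordinary hv).exists_reaches_auxEdges hr hs hvw
  exact hb.eq_of_mem_Tset (hs.trans hvw) hw ▸ hvb

end Contraction

theorem aux_graph_path_correspondence_general
    {V : Type*} (E : Set (V × V)) (s : V)
    (hsc : StronglyConnected E) (r dr v w : V)
    (_hdr : Marked E s r → ImmDomIs E s r dr)
    (hv : v ∈ Tset E s r) (hw : w ∈ Tset E s r) :
    Reaches E v w ↔ Reaches (auxEdges E s r dr) v w :=
  ⟨reaches_auxEdges_of_reaches dr (hsc s v) hv hw, fun _ => hsc v w⟩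

/-- Let `r` be a root and `v, w ∈ T(r)`. Then there is a path from `v` to `w` in `G`
if and only if there is a path from `v` to `w` in the auxiliary graph `G_r`. -/
theorem aux_graph_path_correspondence
    {V : Type*} [Fintype V] (E : Set (V × V)) (s : V)
    (hsc : StronglyConnected E) (r dr v w : V)
    (hr : IsRoot E s r) (hdr : Marked E s r → ImmDomIs E s r dr)
    (hv : v ∈ Tset E s r) (hw : w ∈ Tset E s r) :
    Reaches E v w ↔ Reaches (auxEdges E s r dr) v w :=
  aux_graph_path_correspondence_general E s hsc r dr v w hdr hv hw
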